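/- Let m ≥ 2 be a positive integer that is not a power of 2. Then the difference graph of the generalized quaternion group Q_{4m} of order 4m is isomorphic (as a graph) to the difference graph of the cyclic group Z_{2m}. -/

import Mathlib

/-- Adjacency in the difference of the enhanced power graph and the power graph:
`⟨x, y⟩` is cyclic but neither of `x`, `y` is a power of the other. -/
def diffAdj {G : Type*} [Group G] (x y : G) : Prop :=
  IsCyclic (Subgroup.closure ({x, y} : Set G)) ∧
    (¬ ∃ k : ℤ, y = x ^ k) ∧ (¬ ∃ k : ℤ, x = y ^ k)

/-- The vertex set of the difference graph `𝒟(G)`: the elements of `G` that are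
non-isolated in the difference of the enhanced power graph and the power graph. -/
abbrev DiffVertex (G : Type*) [Group G] := {x : G // ∃ y, diffAdj x y}

/-- The difference graph `𝒟(G)` of a group `G`. -/
def diffGraph (G : Type*) [Group G] : SimpleGraph (DiffVertex G) :=
  SimpleGraph.fromRel (fun a b => diffAdj a.val b.val)

/-- A dominating set of a graph: every vertex is in `S` or adjacent to a vertex of `S`. -/
def IsDominatingSet {V : Type*} (Γ : SimpleGraph V) (S : Set V) : Prop :=
  ∀ v : V, v ∈ S ∨ ∃ u ∈ S, Γ.Adj u v

/-- The domination number of a graph: the least size of a dominating set. -/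
noncomputable def dominationNumber {V : Type*} (Γ : SimpleGraph V) : ℕ :=
  sInf {n : ℕ | ∃ S : Set V, IsDominatingSet Γ S ∧ S.ncard = n}

/-- A maximal cyclic subgroup: a cyclic subgroup not properly contained in
another cyclic subgroup. -/
def IsMaxCyclic {G : Type*} [Group G] (C : Subgroup G) : Prop :=
  IsCyclic C ∧ ∀ D : Subgroup G, IsCyclic D → C ≤ D → C = D

lemma diffAdj_symm' {G : Type*} [Group G] {x y : G} (h : diffAdj x y) : diffAdj y x := by
  obtain ⟨h1, h2, h3⟩ := h
  refine ⟨?_, h3, h2⟩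
  rw [Set.pair_comm]; exact h1

lemma diffAdj_map {G H : Type*} [Group G] [Group H] (f : G →* H)
    (hf : Function.Injective f) (x y : G) : diffAdj (f x) (f y) ↔ diffAdj x y := by
  unfold diffAdj
  have h1 : Subgroup.closure ({f x, f y} : Set H) = (Subgroup.closure ({x, y} : Set G)).map f := by
    rw [MonoidHom.map_closure, Set.image_pair]
  rw [h1, ← ((Subgroup.closure ({x, y} : Set G)).equivMapOfInjective f hf).isCyclic]
  simp only [← map_zpow, hf.eq_iff]

def quatEmb (m : ℕ) : Multiplicative (ZMod (2 * m)) →* QuaternionGroup m where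
  toFun i := QuaternionGroup.a i.toAdd
  map_one' := rfl
  map_mul' _ _ := rfl

lemma quatEmb_inj (m : ℕ) : Function.Injective (quatEmb m) := by
  intro i j h
  exact QuaternionGroup.a.inj h

lemma not_diffAdj_xa (m : ℕ) (i : ZMod (2 * m)) (z : QuaternionGroup m) :
    ¬ diffAdj (QuaternionGroup.xa i) z := by
  rintro ⟨h1, h2, -⟩
  obtain ⟨⟨g, hg⟩, hgen⟩ := h1
  have key : ∀ w ∈ Subgroup.closure ({QuaternionGroup.xa i, z} : Set (QuaternionGroup m)),
      ∃ k : ℤ, w = g ^ k := by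
    intro w hw
    obtain ⟨k, hk⟩ := hgen ⟨w, hw⟩
    exact ⟨k, by simpa using (congrArg Subtype.val hk).symm⟩
  obtain ⟨k, hk⟩ := key _ (Subgroup.subset_closure (Set.mem_insert _ _))
  obtain ⟨l, hl⟩ := key z (Subgroup.subset_closure (by simp))
  have ha : ∀ (j : ZMod (2 * m)) (t : ℤ), QuaternionGroup.xa i ≠ (QuaternionGroup.a j) ^ t := by
    intro j t h
    have : (QuaternionGroup.a j) ^ t = quatEmb m ((Multiplicative.ofAdd j) ^ t) := by
      rw [map_zpow]; rfl
    rw [this] at h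
    exact QuaternionGroup.noConfusion rfl (heq_of_eq h)
  rcases g with j | j
  · exact ha j k hk
  · rcases Int.even_or_odd' k with ⟨t, rfl | rfl⟩
    · rw [zpow_mul] at hk
      have : (QuaternionGroup.xa j) ^ (2 : ℤ) = QuaternionGroup.a (m : ZMod (2 * m)) := by
        exact_mod_cast QuaternionGroup.xa_sq j
      rw [this] at hk
      exact ha _ _ hk
    · have h4 : (QuaternionGroup.xa j) ^ (4 : ℤ) = 1 := by
        exact_mod_cast QuaternionGroup.xa_pow_four j
      apply h2
      refine ⟨(2 * t + 1) * l, ?_⟩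
      rw [hk, hl, ← zpow_mul,
        show (2 * t + 1) * ((2 * t + 1) * l) = 4 * ((t * t + t) * l) + l by ring,
        zpow_add, zpow_mul, h4, one_zpow, one_mul]

/-- For `m ≥ 2` not a power of `2`, the difference graph of the generalized quaternion
(dicyclic) group of order `4m` is isomorphic to the difference graph of the cyclic group
of order `2m`. -/
theorem quaternion_diffGraph_iso_cyclic
    (m : ℕ) (hm : 2 ≤ m) (h2 : ¬ ∃ k : ℕ, m = 2 ^ k) :
    Nonempty (diffGraph (QuaternionGroup m) ≃g diffGraph (Multiplicative (ZMod (2 * m)))) := by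
  have hmap := diffAdj_map (quatEmb m) (quatEmb_inj m)
  let F : DiffVertex (Multiplicative (ZMod (2 * m))) → DiffVertex (QuaternionGroup m) :=
    fun x => ⟨quatEmb m x.1, x.2.elim fun y hy => ⟨quatEmb m y, (hmap _ _).2 hy⟩⟩
  have hF : Function.Bijective F := by
    constructor
    · intro x y h
      exact Subtype.ext (quatEmb_inj m (congrArg Subtype.val h))
    · rintro ⟨i | i, y, hy⟩
      · rcases y with j | j
        · exact ⟨⟨Multiplicative.ofAdd i, Multiplicative.ofAdd j, (hmap _ _).1 hy⟩, rfl⟩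
        · exact absurd (diffAdj_symm' hy) (not_diffAdj_xa m _ _)
      · exact absurd hy (not_diffAdj_xa m _ _)
  refine ⟨RelIso.symm ⟨Equiv.ofBijective F hF, ?_⟩⟩
  intro x y
  simp only [diffGraph, SimpleGraph.fromRel_adj, Equiv.ofBijective_apply, ne_eq, hF.1.eq_iff]
  simp only [F, hmap]
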